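/- arXiv:2310.09287 — 7 statements merged into one kernel-verified Lean document; each statement's English description precedes it below -/
import Mathlib

section
/- Let S = ⟨n₁, n₂, …, n_e⟩ be a numerical semigroup with minimal generators n₁ < n₂ < ⋯ < n_e and n₁ ≥ 2. If S is a MANS-semigroup, then n₂ mod n₁ < n₃ mod n₁ < ⋯ < n_e mod n₁. -/
/-- `S ⊆ ℕ` is a numerical semigroup: contains `0`, closed under addition,
and has finite complement in `ℕ`. -/
def IsNumSgp (S : Set ℕ) : Prop :=
  0 ∈ S ∧ (∀ a ∈ S, ∀ b ∈ S, a + b ∈ S) ∧ Sᶜ.Finite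

/-- `⟨A⟩`: the additive submonoid of `ℕ` generated by `A`, viewed as a set. -/
def gen (A : Set ℕ) : Set ℕ := (AddSubmonoid.closure A : Set ℕ)

/-- The multiplicity `m(S)`: the least nonzero element of `S`. -/
noncomputable def nsMult (S : Set ℕ) : ℕ := sInf {x | x ∈ S ∧ x ≠ 0}

/-- The minimal system of generators of `S`: the nonzero elements of `S` that are
not a sum of two nonzero elements of `S`. -/
def msg (S : Set ℕ) : Set ℕ :=
  {x | x ∈ S ∧ x ≠ 0 ∧ ∀ a ∈ S, a ≠ 0 → ∀ b ∈ S, b ≠ 0 → x ≠ a + b}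

/-- The ratio `r(S)`: the second smallest minimal generator of `S`. -/
noncomputable def nsRatio (S : Set ℕ) : ℕ := sInf (msg S \ {nsMult S})

/-- The maximum minimal generator `M(S)`. -/
noncomputable def nsMaxGen (S : Set ℕ) : ℕ := sSup (msg S)

/-- The Apéry set `Ap(S, n) = {s ∈ S : s - n ∉ S}`. -/
def AperySet (S : Set ℕ) (n : ℕ) : Set ℕ :=
  {s | s ∈ S ∧ ¬ ∃ y ∈ S, y + n = s}

/-- `w(i)`: the least element of `S` congruent to `i` modulo `n`. -/
noncomputable def aperyW (S : Set ℕ) (n i : ℕ) : ℕ :=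
  sInf {s | s ∈ S ∧ s % n = i % n}

/-- A MANS-semigroup: a numerical semigroup whose Apéry set with respect to the
multiplicity is monotone, i.e. `w(1) < w(2) < ⋯ < w(m(S) - 1)`. -/
def IsMANS (S : Set ℕ) : Prop :=
  IsNumSgp S ∧ ∀ i : ℕ, 0 < i → i + 1 < nsMult S →
    aperyW S (nsMult S) i < aperyW S (nsMult S) (i + 1)

/-- The Frobenius number `F(S)`: the greatest integer not in `S`. -/
noncomputable def nsFrob (S : Set ℕ) : ℕ := sSup {x | x ∉ S}

/-- The genus `g(S)`: the number of gaps of `S`. -/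
noncomputable def nsGenus (S : Set ℕ) : ℕ := Set.ncard {x | x ∉ S}

/-- The set of pseudo-Frobenius numbers of `S`: integers `x ∉ S` such that
`x + s ∈ S` for every nonzero `s ∈ S`. -/
def nsPF (S : Set ℕ) : Set ℤ :=
  {x : ℤ | x ∉ ((Nat.cast : ℕ → ℤ) '' S) ∧
    ∀ s ∈ S, s ≠ 0 → x + (s : ℤ) ∈ ((Nat.cast : ℕ → ℤ) '' S)}

/-- The type `t(S)`: the number of pseudo-Frobenius numbers of `S`. -/
noncomputable def nsType (S : Set ℕ) : ℕ := (nsPF S).ncard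

/-- `S` is pseudo-symmetric iff `F(S) = 2 g(S) - 2`. -/
def IsPseudoSymmetric (S : Set ℕ) : Prop :=
  (nsFrob S : ℤ) = 2 * (nsGenus S : ℤ) - 2

/-!
Every minimal generator `x ≠ m(S)` lies in the Apéry set of `m(S)`, so `x = w(x mod m(S))`, and
`x mod m(S) ≠ 0` because `w(0) = 0`. If `w` is strictly increasing on the nonzero residues, it
reflects the order, so `x ↦ x mod m(S)` is strictly increasing on these generators.
-/

/-- A numerical semigroup as a bundled additive submonoid of `ℕ`, giving access to the library on
submonoids; the finiteness of the complement is forgotten. -/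
def IsNumSgp.toAddSubmonoid {S : Set ℕ} (hS : IsNumSgp S) : AddSubmonoid ℕ where
  carrier := S
  zero_mem' := hS.1
  add_mem' ha hb := hS.2.1 _ ha _ hb

theorem isLeast_msg_nsMult {S : Set ℕ} (hS : {x | x ∈ S ∧ x ≠ 0}.Nonempty) :
    IsLeast (msg S) (nsMult S) := by
  obtain ⟨hmem, hne⟩ : nsMult S ∈ S ∧ nsMult S ≠ 0 := Nat.sInf_mem hS
  have hle {x : ℕ} (hx : x ∈ S) (hx0 : x ≠ 0) : nsMult S ≤ x := Nat.sInf_le ⟨hx, hx0⟩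
  refine ⟨⟨hmem, hne, fun a ha ha0 b _ hb0 hab => ?_⟩, fun x hx => hle hx.1 hx.2.1⟩
  have := hle ha ha0
  omega

theorem msg_diff_singleton_subset_aperySet {S : Set ℕ} {m : ℕ} (hm : m ∈ S) (hm0 : m ≠ 0) :
    msg S \ {m} ⊆ AperySet S m := by
  rintro x ⟨⟨hxS, -, hx_irred⟩, hxm : x ≠ m⟩
  refine ⟨hxS, fun ⟨y, hy, hyx⟩ => ?_⟩
  exact hx_irred y hy (by omega) m hm hm0 hyx.symm

theorem aperyW_mod (S : Set ℕ) (m i : ℕ) : aperyW S m (i % m) = aperyW S m i := by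
  simp only [aperyW, Nat.mod_mod]

theorem aperyW_zero {S : Set ℕ} (h0 : 0 ∈ S) (m : ℕ) : aperyW S m 0 = 0 :=
  Nat.sInf_eq_zero.2 (.inl ⟨h0, rfl⟩)

section AddSubmonoid

variable {S : AddSubmonoid ℕ} {m x : ℕ}

theorem le_of_modEq_of_mem_aperySet (hm : m ∈ S) (hx : x ∈ AperySet S m) {s : ℕ} (hs : s ∈ S)
    (hsx : s ≡ x [MOD m]) : x ≤ s := by
  by_contra! hlt
  obtain ⟨t, rfl⟩ := (Nat.modEq_iff_exists_eq_add hlt.le).1 hsx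
  obtain ⟨k, rfl⟩ : ∃ k, t = k + 1 := Nat.exists_eq_succ_of_ne_zero (by rintro rfl; simp at hlt)
  have hmem : s + k • m ∈ S := add_mem hs (nsmul_mem hm k)
  exact hx.2 ⟨s + k • m, hmem, by rw [smul_eq_mul]; ring⟩

theorem aperyW_eq_self_of_mem_aperySet (hm : m ∈ S) (hx : x ∈ AperySet S m) :
    aperyW S m x = x :=
  IsLeast.csInf_eq ⟨⟨hx.1, rfl⟩, fun _ hs => le_of_modEq_of_mem_aperySet hm hx hs.1 hs.2⟩

theorem mod_ne_zero_of_mem_aperySet (hm : m ∈ S) (hx : x ∈ AperySet S m) (hx0 : x ≠ 0) :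
    x % m ≠ 0 := fun hmod =>
  hx0 <| calc
    x = aperyW S m (x % m) := by rw [aperyW_mod, aperyW_eq_self_of_mem_aperySet hm hx]
    _ = 0 := by rw [hmod, aperyW_zero S.zero_mem]

theorem strictMonoOn_mod_aperySet (hm : m ∈ S) (hm0 : m ≠ 0)
    (hw : StrictMonoOn (aperyW S m) (Set.Ioo 0 m)) :
    StrictMonoOn (· % m) (AperySet S m \ {0}) := by
  have hres {x : ℕ} (hx : x ∈ AperySet S m \ {0}) : x % m ∈ Set.Ioo 0 m :=
    ⟨Nat.pos_of_ne_zero (mod_ne_zero_of_mem_aperySet hm hx.1 hx.2),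
      Nat.mod_lt x (Nat.pos_of_ne_zero hm0)⟩
  intro x hx y hy hxy
  rw [← hw.lt_iff_lt (hres hx) (hres hy), aperyW_mod, aperyW_mod,
    aperyW_eq_self_of_mem_aperySet hm hx.1, aperyW_eq_self_of_mem_aperySet hm hy.1]
  exact hxy

end AddSubmonoid

theorem IsMANS.strictMonoOn_aperyW {S : Set ℕ} (hS : IsMANS S) :
    StrictMonoOn (aperyW S (nsMult S)) (Set.Ioo 0 (nsMult S)) :=
  strictMonoOn_of_lt_add_one Set.ordConnected_Ioo fun i _ hi hi' => hS.2 i hi.1 hi'.2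

theorem IsMANS.strictMonoOn_mod_msg {S : Set ℕ} (hS : IsMANS S) :
    StrictMonoOn (· % nsMult S) (msg S \ {nsMult S}) := by
  intro x hx
  obtain ⟨hm, hm0, -⟩ := (isLeast_msg_nsMult ⟨x, hx.1.1, hx.1.2.1⟩).1
  have hsub : msg S \ {nsMult S} ⊆ AperySet S (nsMult S) \ {0} := fun y hy =>
    ⟨msg_diff_singleton_subset_aperySet hm hm0 hy, hy.1.2.1⟩
  have hmod := strictMonoOn_mod_aperySet (S := hS.1.toAddSubmonoid) hm hm0 hS.strictMonoOn_aperyW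
  exact hmod.mono hsub hx

theorem stmt0 (S : Set ℕ) (e : ℕ) (he : 2 ≤ e) (n : Fin e → ℕ)
    (hS : IsNumSgp S) (hmono : StrictMono n) (hmsg : msg S = Set.range n)
    (h2 : 2 ≤ n ⟨0, by omega⟩) (hM : IsMANS S) :
    ∀ i j : Fin e, 0 < (i : ℕ) → i < j →
      n i % n ⟨0, by omega⟩ < n j % n ⟨0, by omega⟩ := by
  intro i j hi hij
  have hn (k : Fin e) : n k ∈ msg S := hmsg ▸ Set.mem_range_self k
  have hfirst : IsLeast (msg S) (n ⟨0, by omega⟩) :=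
    ⟨hn _, hmsg ▸ Set.forall_mem_range.2 fun k => hmono.monotone (Nat.zero_le k)⟩
  have hmult : nsMult S = n ⟨0, by omega⟩ :=
    (isLeast_msg_nsMult ⟨_, (hn i).1, (hn i).2.1⟩).unique hfirst
  have hmem (k : Fin e) (hk : 0 < (k : ℕ)) : n k ∈ msg S \ {nsMult S} :=
    ⟨hn k, hmult ▸ (hmono (Fin.mk_lt_of_lt_val hk)).ne'⟩
  rw [← hmult]
  exact hM.strictMonoOn_mod_msg (hmem i hi) (hmem j (hi.trans hij)) (hmono hij)
end

section
/- Let S = ⟨n₁, n₂⟩ be a numerical semigroup with 2 ≤ n₁ < n₂ (i.e. gcd(n₁,n₂)=1). Then S is a MANS-semigroup if and only if there exists a positive integer a such that n₂ = a·n₁ + 1. -/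
/-!
For coprime `n` and `m`, the multiples `0, m, …, (n - 1) * m` represent every class modulo `n`, and
each is the least element of `⟨n, m⟩` in its class, so `w(j * m) = j * m` for `j < n`. In particular
the smallest nonzero Apéry element `m` is `w(m % n)`. Monotonicity forces it to be `w(1)`, that is,
`m ≡ 1` modulo `n`; conversely, `m ≡ 1` gives `w(j) = j * m`, which increases with `j`.
-/

variable {S A : Set ℕ} {n m i j x : ℕ}

theorem mem_gen_pair : x ∈ gen {n, m} ↔ ∃ p q : ℕ, p * n + q * m = x := by
  simp only [gen, SetLike.mem_coe, AddSubmonoid.mem_closure_pair, smul_eq_mul]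

theorem setGcd_pair (n m : ℕ) : Nat.setGcd {n, m} = n.gcd m := by
  refine Nat.dvd_antisymm (Nat.dvd_gcd ?_ ?_) (Nat.dvd_setGcd_iff.2 ?_)
  · exact Nat.setGcd_dvd_of_mem (Set.mem_insert _ _)
  · exact Nat.setGcd_dvd_of_mem (Set.mem_insert_of_mem _ rfl)
  · rintro _ (rfl | rfl)
    exacts [Nat.gcd_dvd_left _ _, Nat.gcd_dvd_right _ _]

theorem isNumSgp_gen (hA : Nat.setGcd A = 1) : IsNumSgp (gen A) := by
  refine ⟨zero_mem (AddSubmonoid.closure A), fun _ ha _ hb ↦ add_mem ha hb, ?_⟩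
  obtain ⟨N, hN⟩ := Nat.exists_mem_closure_of_ge A
  refine (Set.finite_Iio N).subset fun x hx ↦ Set.mem_Iio.2 (not_le.1 fun hNx ↦ hx ?_)
  exact hN x hNx (hA ▸ one_dvd x)

theorem le_of_mem_gen (hn : n ∈ lowerBounds A) (hx : x ∈ gen A) (hx0 : x ≠ 0) : n ≤ x := by
  induction hx using AddSubmonoid.closure_induction with
  | mem a ha => exact hn ha
  | zero => exact absurd rfl hx0
  | add a b _ _ iha ihb => grind

theorem nsMult_gen (hn : IsLeast A n) (hn0 : n ≠ 0) : nsMult (gen A) = n :=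
  IsLeast.csInf_eq ⟨⟨AddSubmonoid.subset_closure hn.1, hn0⟩,
    fun _ hx ↦ le_of_mem_gen hn.2 hx.1 hx.2⟩

theorem isMANS_iff_strictMonoOn :
    IsMANS S ↔ IsNumSgp S ∧ StrictMonoOn (aperyW S (nsMult S)) (Set.Ioo 0 (nsMult S)) := by
  refine and_congr_right fun _ ↦ ⟨fun h ↦ ?_, fun h i hi0 hi ↦ ?_⟩
  · exact strictMonoOn_of_lt_add_one Set.ordConnected_Ioo fun i _ hi hi' ↦ h i hi.1 hi'.2
  · exact h ⟨hi0, i.lt_succ_self.trans hi⟩ ⟨i.succ_pos, hi⟩ i.lt_succ_self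

theorem aperyW_congr (h : i ≡ j [MOD n]) : aperyW S n i = aperyW S n j :=
  congrArg (fun r ↦ sInf {s | s ∈ S ∧ s % n = r}) h

theorem aperyW_gen_pair_mul (h : n.Coprime m) (hj : j < n) :
    aperyW (gen {n, m}) n (j * m) = j * m := by
  refine IsLeast.csInf_eq ⟨⟨mem_gen_pair.2 ⟨0, j, by rw [zero_mul, zero_add]⟩, rfl⟩, ?_⟩
  rintro _ ⟨hx, hmod⟩
  obtain ⟨p, q, rfl⟩ := mem_gen_pair.1 hx
  have hqj : q ≡ j [MOD n] := by
    refine Nat.ModEq.cancel_right_of_coprime h (?_ : q * m % n = j * m % n)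
    rwa [Nat.mul_add_mod_self_right] at hmod
  have hjq : j ≤ q := Nat.mod_eq_of_lt hj ▸ hqj ▸ Nat.mod_le q n
  exact (Nat.mul_le_mul_right m hjq).trans (Nat.le_add_left _ _)

theorem le_aperyW_gen_pair (h : n.Coprime m) (hn : n ≠ 0) (hi : ¬ n ∣ i) :
    m ≤ aperyW (gen {n, m}) n i := by
  obtain ⟨j, hjn, hj⟩ := Nat.exists_mul_mod_eq_of_coprime i h.symm hn
  have hij : i ≡ j * m [MOD n] := by rw [mul_comm, Nat.ModEq, hj]
  have hj0 : 0 < j := by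
    refine Nat.pos_of_ne_zero fun hj0 ↦ hi ?_
    rwa [hj0, zero_mul, Nat.modEq_zero_iff_dvd] at hij
  rw [aperyW_congr hij, aperyW_gen_pair_mul h hjn]
  exact Nat.le_mul_of_pos_left m hj0

theorem modEq_one_of_strictMonoOn_aperyW_gen_pair (h : n.Coprime m)
    (hmono : StrictMonoOn (aperyW (gen {n, m}) n) (Set.Ioo 0 n)) : m ≡ 1 [MOD n] := by
  obtain hn | hn := le_or_gt n 1
  · interval_cases n
    · rw [(Nat.coprime_zero_left m).1 h]
    · exact Nat.modEq_one
  have hr0 : 0 < m % n :=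
    Nat.pos_of_ne_zero fun hr ↦ hn.ne' (h.eq_one_of_dvd (Nat.dvd_of_mod_eq_zero hr))
  have hr : m % n ∈ Set.Ioo 0 n := ⟨hr0, Nat.mod_lt m (by lia)⟩
  have hwr : aperyW (gen {n, m}) n (m % n) = m := by
    rw [aperyW_congr (Nat.mod_modEq m n)]
    simpa only [one_mul] using aperyW_gen_pair_mul h hn
  have hw1 : m ≤ aperyW (gen {n, m}) n 1 :=
    le_aperyW_gen_pair h (by lia) (Nat.not_dvd_of_pos_of_lt one_pos hn)
  have hr1 : m % n ≤ 1 := (hmono.le_iff_le hr ⟨one_pos, hn⟩).1 (hwr.trans_le hw1)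
  rw [Nat.ModEq, Nat.mod_eq_of_lt hn]
  exact le_antisymm hr1 hr0

theorem aperyW_gen_pair_of_modEq_one (h : m ≡ 1 [MOD n]) (hi : i < n) :
    aperyW (gen {n, m}) n i = i * m := by
  have hcop : n.Coprime m := Nat.Coprime.symm (h.gcd_eq.trans (Nat.gcd_one_left n))
  have him : i ≡ i * m [MOD n] := by simpa only [mul_one] using (h.mul_left i).symm
  rw [aperyW_congr him, aperyW_gen_pair_mul hcop hi]

theorem strictMonoOn_aperyW_gen_pair_of_modEq_one (h : m ≡ 1 [MOD n]) :
    StrictMonoOn (aperyW (gen {n, m}) n) (Set.Ioo 0 n) := by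
  intro i hi j hj hij
  have hm : 0 < m := by
    refine Nat.pos_of_ne_zero fun hm ↦ ?_
    have hn : n ∣ 1 := Nat.modEq_zero_iff_dvd.1 (hm ▸ h.symm)
    exact Nat.not_dvd_of_pos_of_lt one_pos (Nat.lt_of_le_of_lt hi.1 hi.2) hn
  rw [aperyW_gen_pair_of_modEq_one h hi.2, aperyW_gen_pair_of_modEq_one h hj.2]
  exact Nat.mul_lt_mul_of_pos_right hij hm

theorem modEq_one_iff_exists_pos (hm : 1 < m) :
    m ≡ 1 [MOD n] ↔ ∃ a : ℕ, 1 ≤ a ∧ m = a * n + 1 := by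
  rw [Nat.ModEq.comm, Nat.modEq_iff_dvd' hm.le, dvd_iff_exists_eq_mul_left]
  refine exists_congr fun a ↦ ⟨fun h ↦ ⟨?_, by lia⟩, fun h ↦ by lia⟩
  exact Nat.pos_of_ne_zero fun ha ↦ by lia

theorem stmt2 (n1 n2 : ℕ) (h1 : 2 ≤ n1) (h12 : n1 < n2) (hgcd : Nat.gcd n1 n2 = 1) :
    IsMANS (gen {n1, n2}) ↔ ∃ a : ℕ, 1 ≤ a ∧ n2 = a * n1 + 1 := by
  have hleast : IsLeast {n1, n2} n1 := ⟨Set.mem_insert _ _, by simpa using h12.le⟩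
  have hmult : nsMult (gen {n1, n2}) = n1 := nsMult_gen hleast (by lia)
  have hsgp : IsNumSgp (gen {n1, n2}) := isNumSgp_gen ((setGcd_pair n1 n2).trans hgcd)
  rw [isMANS_iff_strictMonoOn, and_iff_right hsgp, hmult, ← modEq_one_iff_exists_pos (by lia)]
  exact ⟨modEq_one_of_strictMonoOn_aperyW_gen_pair hgcd,
    strictMonoOn_aperyW_gen_pair_of_modEq_one⟩
end

section
/- Let m, a, b, t be natural numbers with m ≥ 3, a ≥ 1, t ∈ {2, …, m−1}, and (t−1)(am+1) < bm+t < t(am+1). Then S = ⟨m, am+1, bm+t⟩ is a numerical semigroup with embedding dimension e(S) = 3. -/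
/-!
A minimal generator of `⟨A⟩` belongs to `A`, and an element `x ∈ A` is a minimal generator as soon
as the elements of `A` below `x` do not generate it, because the summands of `x` are smaller than
`x`. So it is enough to compare each of `m < am + 1 < bm + t` with the smaller ones. For `am + 1`
this is divisibility by `m`. For `bm + t`, only the generator `am + 1 ≡ 1 (mod m)` changes residues
modulo `m`, so an element of `⟨m, am + 1⟩` with residue `t` uses at least `t` copies of it, while
`bm + t < t(am + 1)`.
-/

theorem subset_gen (A : Set ℕ) : A ⊆ gen A :=
  AddSubmonoid.subset_closure

theorem gen_mono {A B : Set ℕ} (h : A ⊆ B) : gen A ⊆ gen B :=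
  AddSubmonoid.closure_mono h

theorem isNumSgp_gen_of_setGcd_eq_one {A : Set ℕ} (hA : Nat.setGcd A = 1) : IsNumSgp (gen A) := by
  refine ⟨zero_mem (AddSubmonoid.closure A),
    fun _ hu _ hv ↦ add_mem (S := AddSubmonoid ℕ) hu hv, ?_⟩
  obtain ⟨N, hN⟩ := Nat.exists_mem_closure_of_ge A
  refine (Set.finite_Iio N).subset fun n hn ↦ ?_
  by_contra hNn
  exact hn (hN n (not_lt.mp hNn) (hA ▸ one_dvd n))

theorem mem_gen_inter_Iio {A : Set ℕ} {n x : ℕ} (hn : n ∈ gen A) (hnx : n < x) :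
    n ∈ gen (A ∩ Set.Iio x) := by
  induction hn using AddSubmonoid.closure_induction with
  | mem n hn => exact subset_gen _ ⟨hn, hnx⟩
  | zero => exact zero_mem (AddSubmonoid.closure _)
  | add u v _ _ hu hv =>
    exact add_mem (S := AddSubmonoid ℕ) (hu (by omega)) (hv (by omega))

theorem msg_gen_subset (A : Set ℕ) : msg (gen A) ⊆ A := by
  rintro x ⟨hx, hx0, hirred⟩
  induction hx using AddSubmonoid.closure_induction with
  | mem x hx => exact hx
  | zero => exact absurd rfl hx0
  | add u v hu hv ihu ihv =>
    obtain rfl | hu0 := eq_or_ne u 0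
    · rw [zero_add] at hx0 hirred ⊢
      exact ihv hx0 hirred
    obtain rfl | hv0 := eq_or_ne v 0
    · exact ihu hx0 hirred
    exact absurd rfl (hirred u hu hu0 v hv hv0)

theorem mem_msg_gen_of_notMem {A : Set ℕ} {x : ℕ} (hxA : x ∈ A) (hx : x ∉ gen (A ∩ Set.Iio x)) :
    x ∈ msg (gen A) := by
  refine ⟨subset_gen A hxA, ?_, ?_⟩
  · rintro rfl
    exact hx (zero_mem (AddSubmonoid.closure _))
  · intro u hu hu0 v hv hv0 hxuv
    have hu' : u ∈ gen (A ∩ Set.Iio x) := mem_gen_inter_Iio hu (by omega)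
    have hv' : v ∈ gen (A ∩ Set.Iio x) := mem_gen_inter_Iio hv (by omega)
    have huv : u + v ∈ gen (A ∩ Set.Iio x) := add_mem (S := AddSubmonoid ℕ) hu' hv'
    rw [← hxuv] at huv
    exact hx huv

theorem msg_gen_eq_self {A : Set ℕ} (hA : ∀ x ∈ A, x ∉ gen (A ∩ Set.Iio x)) :
    msg (gen A) = A :=
  (msg_gen_subset A).antisymm fun x hx ↦ mem_msg_gen_of_notMem hx (hA x hx)

theorem mem_gen_singleton {p n : ℕ} : n ∈ gen {p} ↔ p ∣ n := by
  simp only [gen, SetLike.mem_coe, AddSubmonoid.mem_closure_singleton, smul_eq_mul,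
    dvd_iff_exists_eq_mul_left, eq_comm]

theorem msg_gen_triple {p q r : ℕ} (hp : p ≠ 0) (hpq : p < q) (hqr : q < r)
    (hq : ¬p ∣ q) (hr : r ∉ gen {p, q}) : msg (gen {p, q, r}) = {p, q, r} := by
  apply msg_gen_eq_self
  rintro x (rfl | rfl | rfl) hx
  · have hsub : {x, q, r} ∩ Set.Iio x ⊆ ({0} : Set ℕ) := by grind
    exact hp (zero_dvd_iff.mp (mem_gen_singleton.mp (gen_mono hsub hx)))
  · have hsub : {p, x, r} ∩ Set.Iio x ⊆ ({p} : Set ℕ) := by grind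
    exact hq (mem_gen_singleton.mp (gen_mono hsub hx))
  · have hsub : {p, q, x} ∩ Set.Iio x ⊆ ({p, q} : Set ℕ) := by grind
    exact hr (gen_mono hsub hx)

theorem mod_mul_le_of_mem_gen_pair {m c n : ℕ} (hc : c ≡ 1 [MOD m]) (hn : n ∈ gen {m, c}) :
    n % m * c ≤ n := by
  obtain ⟨x, y, rfl⟩ := (AddSubmonoid.mem_closure_pair m c n).mp hn
  simp only [smul_eq_mul]
  have hmod : x * m + y * c ≡ y [MOD m] := by
    simpa using (Nat.modEq_zero_iff_dvd.mpr (dvd_mul_left m x)).add (hc.mul_left y)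
  calc (x * m + y * c) % m * c = y % m * c := by rw [hmod]
    _ ≤ y * c := Nat.mul_le_mul_right c (Nat.mod_le y m)
    _ ≤ x * m + y * c := Nat.le_add_left _ _

theorem stmt4_general (m a b t : ℕ) (htm : t < m)
    (hqr : a * m + 1 < b * m + t) (hrt : b * m + t < t * (a * m + 1)) :
    IsNumSgp (gen {m, a * m + 1, b * m + t}) ∧
      (msg (gen {m, a * m + 1, b * m + t})).ncard = 3 := by
  have ha : a ≠ 0 := by
    rintro rfl
    omega
  have ht : 1 < t :=
    lt_of_mul_lt_mul_right (by rw [one_mul]; exact hqr.trans hrt) (Nat.zero_le (a * m + 1))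
  have hpq : m < a * m + 1 := Nat.lt_succ_of_le (Nat.le_mul_of_pos_left m (by omega))
  have hcop : Nat.Coprime m (a * m + 1) := by simp
  have hq : ¬m ∣ a * m + 1 := fun h ↦ by
    have := hcop.eq_one_of_dvd h
    omega
  have hr : b * m + t ∉ gen {m, a * m + 1} := fun h ↦ by
    have hmod : (b * m + t) % m = t := by rw [Nat.mul_add_mod', Nat.mod_eq_of_lt htm]
    have hle := mod_mul_le_of_mem_gen_pair (by simp [Nat.ModEq]) h
    rw [hmod] at hle
    exact hle.not_gt hrt
  constructor
  · exact isNumSgp_gen_of_setGcd_eq_one (Nat.eq_one_of_dvd_coprimes hcop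
      (Nat.setGcd_dvd_of_mem (by simp)) (Nat.setGcd_dvd_of_mem (by simp)))
  · rw [msg_gen_triple (by omega) hpq hqr hq hr]
    exact Set.ncard_eq_three.mpr ⟨_, _, _, hpq.ne, (hpq.trans hqr).ne, hqr.ne, rfl⟩

theorem stmt4 (m a b t : ℕ) (hm : 3 ≤ m) (ha : 1 ≤ a) (ht2 : 2 ≤ t) (htm : t ≤ m - 1)
    (h1 : (t - 1) * (a * m + 1) < b * m + t) (h2 : b * m + t < t * (a * m + 1)) :
    IsNumSgp (gen {m, a * m + 1, b * m + t}) ∧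
      (msg (gen {m, a * m + 1, b * m + t})).ncard = 3 :=
  stmt4_general m a b t (by omega) ((Nat.le_mul_of_pos_left _ (by omega)).trans_lt h1) h2
end

section
/- Let m, a, b, t be natural numbers with m ≥ 3, a ≥ 1, t ∈ {2, …, m−1}, (t−1)(am+1) < bm+t < t(am+1), and S = ⟨m, am+1, bm+t⟩. If λ is a positive integer with (λ−1)t < m ≤ λt, then λ(bm+t) ∉ Ap(S, m). -/
/-!
An element `n` of `Ap(S, m)` is the least element of `S` in its class modulo `m`. For
`n = l * (b * m + t)` this class is that of `r := l * t - m`, and it contains the smaller element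
`r * (a * m + 1)` of `S`: the choice of `l` gives `r ≤ t - 1`, whence
`r * (a * m + 1) ≤ (t - 1) * (a * m + 1) < b * m + t ≤ n`.
-/

theorem notMem_aperySet_of_modEq_of_lt {S : AddSubmonoid ℕ} {m s n : ℕ} (hm : m ∈ S) (hs : s ∈ S)
    (hmod : s ≡ n [MOD m]) (hlt : s < n) : n ∉ AperySet S m := by
  rintro ⟨-, hn⟩
  obtain ⟨k, hk⟩ : m ∣ n - s := (Nat.modEq_iff_dvd' hlt.le).1 hmod
  obtain ⟨j, rfl⟩ : ∃ j, k = j + 1 := Nat.exists_eq_succ_of_ne_zero <| by rintro rfl; omega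
  have hmem : s + j * m ∈ S := add_mem hs (nsmul_mem hm j)
  exact hn ⟨s + j * m, hmem, by rw [mul_comm m, add_one_mul] at hk; omega⟩

theorem mul_sub_mul_lt_mul {m c d t l : ℕ} (hcd : (t - 1) * c < d)
    (hl₁ : (l - 1) * t < m) (hl₂ : m ≤ l * t) : (l * t - m) * c < l * d := by
  have hl : 0 < l := Nat.pos_of_ne_zero <| by rintro rfl; omega
  have hr : l * t - m ≤ t - 1 := by rw [Nat.sub_one_mul] at hl₁; omega
  calc
    (l * t - m) * c ≤ (t - 1) * c := Nat.mul_le_mul_right c hr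
    _ < d := hcd
    _ ≤ l * d := Nat.le_mul_of_pos_left d hl

theorem stmt5_general {S : AddSubmonoid ℕ} {m c d t l : ℕ} (hm : m ∈ S) (hc : c ∈ S)
    (hc_mod : c ≡ 1 [MOD m]) (hd_mod : d ≡ t [MOD m]) (hcd : (t - 1) * c < d)
    (hl₁ : (l - 1) * t < m) (hl₂ : m ≤ l * t) : l * d ∉ AperySet S m := by
  have hmod : (l * t - m) * c ≡ l * d [MOD m] :=
    calc
      (l * t - m) * c ≡ (l * t - m) * 1 [MOD m] := hc_mod.mul_left _
      _ = l * t - m := mul_one _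
      _ ≡ l * t [MOD m] := (Nat.modEq_iff_dvd' (Nat.sub_le _ _)).2 (by rw [Nat.sub_sub_self hl₂])
      _ ≡ l * d [MOD m] := hd_mod.symm.mul_left l
  exact notMem_aperySet_of_modEq_of_lt hm (nsmul_mem hc _) hmod (mul_sub_mul_lt_mul hcd hl₁ hl₂)

theorem stmt5 (m a b t : ℕ) (hm : 3 ≤ m) (ha : 1 ≤ a) (ht2 : 2 ≤ t) (htm : t ≤ m - 1)
    (h1 : (t - 1) * (a * m + 1) < b * m + t) (h2 : b * m + t < t * (a * m + 1))
    (l : ℕ) (hl : 1 ≤ l) (hl1 : (l - 1) * t < m) (hl2 : m ≤ l * t) :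
    l * (b * m + t) ∉ AperySet (gen {m, a * m + 1, b * m + t}) m :=
  stmt5_general (AddSubmonoid.subset_closure (by simp)) (AddSubmonoid.subset_closure (by simp))
    (by simp [Nat.ModEq]) (by simp [Nat.ModEq]) h1 hl1 hl2
end

section
/- Let m, a, b, t be natural numbers with m ≥ 3, a ≥ 1, t ∈ {2, …, m−1}, (t−1)(am+1) < bm+t < t(am+1), and S = ⟨m, am+1, bm+t⟩. If λ ∈ ℕ and λt ≥ m, then λ(bm+t) ∉ Ap(S, m). -/
/-! Subtract `m` from `l * (b * m + t)`. If `m ≤ l`, the difference is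
`(l - m) * (b * m + t) + (b * m + t - 1) * m`. If `l ≤ m`, it is `(l * b) * m + r` with
`r = l * t - m ≤ l * (t - 1)`; as the lower bound on `b * m + t` says that `(t - 1) * a ≤ b`, we get
`r * a ≤ l * b`, which leaves enough copies of `m` to write the difference as `r` copies of
`a * m + 1` plus a multiple of `m`. -/

section Apery

variable {S : AddSubmonoid ℕ} {m a b t l : ℕ}

theorem add_notMem_aperySet {x : ℕ} (hx : x ∈ S) : x + m ∉ AperySet S m :=
  fun h => h.2 ⟨x, hx, rfl⟩

theorem mul_add_mem_of_mul_le {c r : ℕ} (hm : m ∈ S) (ham : a * m + 1 ∈ S) (hrc : r * a ≤ c) :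
    c * m + r ∈ S := by
  obtain ⟨d, rfl⟩ := Nat.exists_eq_add_of_le hrc
  have hdecomp : (r * a + d) * m + r = r • (a * m + 1) + d • m := by
    simp only [smul_eq_mul]
    ring
  rw [hdecomp]
  exact add_mem (nsmul_mem ham r) (nsmul_mem hm d)

theorem mul_notMem_aperySet_of_le {u : ℕ} (hm : m ∈ S) (hu : u ∈ S) (hu0 : u ≠ 0) (hml : m ≤ l) :
    l * u ∉ AperySet S m := by
  obtain ⟨c, rfl⟩ := Nat.exists_eq_add_of_le hml
  obtain ⟨v, rfl⟩ := Nat.exists_eq_succ_of_ne_zero hu0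
  have hdecomp : (m + c) * (v + 1) = (c • (v + 1) + v • m) + m := by
    simp only [smul_eq_mul]
    ring
  rw [Nat.succ_eq_add_one, hdecomp]
  exact add_notMem_aperySet (add_mem (nsmul_mem hu c) (nsmul_mem hm v))

theorem mul_notMem_aperySet_of_le_of_le_mul (hm : m ∈ S) (ham : a * m + 1 ∈ S)
    (hab : (t - 1) * a ≤ b) (hlm : l ≤ m) (hl : m ≤ l * t) :
    l * (b * m + t) ∉ AperySet S m := by
  have hr : l * t - m ≤ l * (t - 1) := by
    rw [Nat.mul_sub_one]
    exact Nat.sub_le_sub_left hlm _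
  have hra : (l * t - m) * a ≤ l * b :=
    calc (l * t - m) * a ≤ l * (t - 1) * a := Nat.mul_le_mul_right a hr
      _ = l * ((t - 1) * a) := Nat.mul_assoc ..
      _ ≤ l * b := Nat.mul_le_mul_left l hab
  have hdecomp : l * (b * m + t) = (l * b * m + (l * t - m)) + m := by
    rw [Nat.add_assoc, Nat.sub_add_cancel hl]
    ring
  rw [hdecomp]
  exact add_notMem_aperySet (mul_add_mem_of_mul_le hm ham hra)

theorem sub_one_mul_le_of_mul_lt (hm : 0 < m) (h : (t - 1) * (a * m + 1) < b * m + t) :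
    (t - 1) * a ≤ b := by
  refine Nat.le_of_mul_le_mul_right ?_ hm
  rw [Nat.mul_add_one, ← Nat.mul_assoc] at h
  omega

theorem stmt6_general (hm : 0 < m) (hmS : m ∈ S) (ham : a * m + 1 ∈ S) (hbm : b * m + t ∈ S)
    (h : (t - 1) * (a * m + 1) < b * m + t) (hl : m ≤ l * t) :
    l * (b * m + t) ∉ AperySet S m := by
  rcases le_total l m with hlm | hml
  · exact mul_notMem_aperySet_of_le_of_le_mul hmS ham (sub_one_mul_le_of_mul_lt hm h) hlm hl
  · exact mul_notMem_aperySet_of_le hmS hbm (Nat.ne_zero_of_lt h) hml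

end Apery

theorem stmt6 (m a b t : ℕ) (hm : 3 ≤ m) (ha : 1 ≤ a) (ht2 : 2 ≤ t) (htm : t ≤ m - 1)
    (h1 : (t - 1) * (a * m + 1) < b * m + t) (h2 : b * m + t < t * (a * m + 1))
    (l : ℕ) (hl : m ≤ l * t) :
    l * (b * m + t) ∉ AperySet (gen {m, a * m + 1, b * m + t}) m := by
  have hgen := AddSubmonoid.subset_closure (s := {m, a * m + 1, b * m + t})
  exact stmt6_general (by omega) (hgen (by simp)) (hgen (by simp)) (hgen (by simp)) h1 hl
end

section
/- Let m, a, b, t be natural numbers with m ≥ 3, a ≥ 1, t ∈ {2, …, m−1}, (t−1)(am+1) < bm+t < t(am+1), and S = ⟨m, am+1, bm+t⟩. If μ ∈ ℕ and μ ≥ t, then μ(am+1) ∉ Ap(S, m). -/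
/-!
An element of the Apéry set of `m ∈ S` is the least element of `S` in its class modulo `m`, and
every summand in `S` of an Apéry element is again an Apéry element. Modulo `m` the generators
`a * m + 1` and `b * m + t` are `1` and `t`, so the inequality `b * m + t < t * (a * m + 1)`
expels `t * (a * m + 1)` from the Apéry set, and with it every `μ * (a * m + 1)` with `t ≤ μ`.
-/

section AddSubmonoid

variable {S : AddSubmonoid ℕ} {m x y t μ : ℕ}

theorem notMem_aperySet_of_modEq_of_lt_s7 (hm : m ∈ S) (hx : x ∈ S) (hxy : x ≡ y [MOD m])
    (hlt : x < y) : y ∉ AperySet S m := by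
  rintro ⟨-, hsub⟩
  obtain ⟨k, hk⟩ : m ∣ y - x := (Nat.modEq_iff_dvd' hlt.le).1 hxy
  obtain rfl : y = x + m * k := by rw [← hk, Nat.add_sub_cancel' hlt.le]
  cases k with
  | zero => exact hlt.ne rfl
  | succ c => exact hsub ⟨x + c • m, add_mem hx (nsmul_mem hm c), by rw [smul_eq_mul]; ring⟩

theorem mem_aperySet_of_add_mem (hx : x ∈ S) (hy : y ∈ S) (h : x + y ∈ AperySet S m) :
    x ∈ AperySet S m := by
  refine ⟨hx, ?_⟩
  rintro ⟨z, hz, rfl⟩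
  exact h.2 ⟨z + y, add_mem hz hy, add_right_comm z y m⟩

theorem mul_mem_aperySet_of_le (hx : x ∈ S) (hle : t ≤ μ) (h : μ * x ∈ AperySet S m) :
    t * x ∈ AperySet S m := by
  obtain ⟨d, rfl⟩ := Nat.exists_eq_add_of_le hle
  rw [add_mul] at h
  exact mem_aperySet_of_add_mem (nsmul_mem hx t) (nsmul_mem hx d) h

theorem mul_notMem_aperySet_of_modEq_of_lt (hm : m ∈ S) (hx : x ∈ S) (hy : y ∈ S)
    (hmod : y ≡ t * x [MOD m]) (hlt : y < t * x) (hle : t ≤ μ) : μ * x ∉ AperySet S m :=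
  fun h ↦ notMem_aperySet_of_modEq_of_lt_s7 hm hy hmod hlt (mul_mem_aperySet_of_le hx hle h)

end AddSubmonoid

theorem mul_add_modEq_mul_mul_add_one (m a b t : ℕ) :
    b * m + t ≡ t * (a * m + 1) [MOD m] := by
  have hgen : a * m + 1 ≡ 1 [MOD m] := by simp [Nat.ModEq]
  calc b * m + t ≡ t * 1 [MOD m] := by simp [Nat.ModEq]
    _ ≡ t * (a * m + 1) [MOD m] := (hgen.mul_left t).symm

theorem stmt7_general {m a b t μ : ℕ} (hlt : b * m + t < t * (a * m + 1)) (hle : t ≤ μ) :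
    μ * (a * m + 1) ∉ AperySet (gen {m, a * m + 1, b * m + t}) m := by
  have hgen : ({m, a * m + 1, b * m + t} : Set ℕ) ⊆ gen {m, a * m + 1, b * m + t} :=
    AddSubmonoid.subset_closure
  exact mul_notMem_aperySet_of_modEq_of_lt (hgen (by simp)) (hgen (by simp)) (hgen (by simp))
    (mul_add_modEq_mul_mul_add_one m a b t) hlt hle

theorem stmt7 (m a b t : ℕ) (hm : 3 ≤ m) (ha : 1 ≤ a) (ht2 : 2 ≤ t) (htm : t ≤ m - 1)
    (h1 : (t - 1) * (a * m + 1) < b * m + t) (h2 : b * m + t < t * (a * m + 1))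
    (μ : ℕ) (hμ : t ≤ μ) :
    μ * (a * m + 1) ∉ AperySet (gen {m, a * m + 1, b * m + t}) m :=
  stmt7_general h2 hμ
end

section
/- Let S = ⟨m, am+1, bm+t⟩ be a MANS-semigroup with embedding dimension 3, where m ≥ 3, a ≥ 1, t ∈ {2, …, m−1}, and (t−1)(am+1) < bm+t < t(am+1). Set q = ⌊(m−1)/t⌋ and r = (m−1) mod t. Then the Frobenius number of S is F(S) = r(am+1) + q(bm+t) − m. -/
/-!
Write `x = am + 1` and `y = bm + t`, so that `gcd(x, m) = 1`, `y ≡ tx (mod m)` and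
`(t - 1)x ≤ y ≤ tx`. Since `ix + jy ≡ (i + tj)x (mod m)`, an element of `⟨m, x, y⟩` in the class
of `kx` pays for a total `k' ≡ k (mod m)` with units costing `x` and blocks of `t` units costing
`y`. As `y ≤ tx`, the cheapest way to pay for `k'` is the greedy one, and as `(t - 1)x ≤ y`, the
greedy cost is monotone in `k'`. Hence the Apéry set of `m` consists of the greedy costs of
`0, …, m - 1`, its maximum is the greedy cost of `m - 1`, and Selmer's formula
`F(S) = max Ap(S, m) - m` concludes.
-/

section Frobenius

variable {A S : Set ℕ} {F n : ℕ}

theorem nsFrob_eq_of_isGreatest (hF : IsGreatest Sᶜ F) : nsFrob S = F :=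
  hF.csSup_eq

theorem isGreatest_compl_gen_nsFrob (hgcd : Nat.setGcd A = 1) (hone : 1 ∉ A) :
    IsGreatest (gen A)ᶜ (nsFrob (gen A)) := by
  obtain ⟨F, hF⟩ : ∃ F, IsGreatest (gen A)ᶜ F := exists_frobeniusNumber_iff.mpr ⟨hgcd, hone⟩
  rwa [nsFrob_eq_of_isGreatest hF]

theorem isGreatest_aperySet_of_isGreatest_compl (hn : 0 < n) (hF : IsGreatest Sᶜ F) :
    IsGreatest (AperySet S n) (F + n) := by
  have mem_of_gt {s : ℕ} (hs : F < s) : s ∈ S := by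
    by_contra hs'
    exact hs.not_ge (hF.2 hs')
  refine ⟨⟨mem_of_gt (by lia), ?_⟩, fun s hs ↦ ?_⟩
  · rintro ⟨y, hy, hyF⟩
    exact hF.1 (Nat.add_right_cancel hyF ▸ hy)
  · by_contra! hlt
    exact hs.2 ⟨s - n, mem_of_gt (by lia), by lia⟩

end Frobenius

section Generators

variable {m x y s : ℕ}

theorem mem_gen_triple : s ∈ gen {m, x, y} ↔ ∃ u i j : ℕ, u * m + i * x + j * y = s := by
  rw [gen, SetLike.mem_coe, ← Submodule.span_nat_eq_addSubmonoidClosure,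
    Submodule.mem_toAddSubmonoid, Submodule.mem_span_triple]
  simp only [smul_eq_mul]

theorem setGcd_triple_eq_one (h : x.Coprime m) : Nat.setGcd {m, x, y} = 1 :=
  Nat.eq_one_of_dvd_coprimes h (Nat.setGcd_dvd_of_mem (by simp)) (Nat.setGcd_dvd_of_mem (by simp))

end Generators

/-- The cost `(k mod t)x + ⌊k / t⌋y` of paying greedily for `k` units, where single units cost `x`
and blocks of `t` units cost `y`. For `k < m` these are the elements of the Apéry set of `m` in
`⟨m, x, y⟩`; for `k = m - 1` this is `rx + qy`. -/
def greedyCost (x y t k : ℕ) : ℕ := k % t * x + k / t * y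

section GreedyCost

variable {m x y t : ℕ}

theorem greedyCost_le_greedyCost_succ (h : (t - 1) * x ≤ y) (k : ℕ) :
    greedyCost x y t k ≤ greedyCost x y t (k + 1) := by
  unfold greedyCost
  by_cases hdvd : t ∣ k + 1
  · have hmod : k % t ≤ t - 1 :=
      Nat.le_sub_one_of_lt (Nat.mod_lt k (Nat.pos_of_dvd_of_pos hdvd k.succ_pos))
    calc k % t * x + k / t * y ≤ (t - 1) * x + k / t * y := by gcongr
      _ ≤ y + k / t * y := by gcongr
      _ = (k + 1) % t * x + (k + 1) / t * y := by
        rw [Nat.mod_eq_zero_of_dvd hdvd, Nat.succ_div_of_dvd hdvd]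
        ring
  · have hdiv : (k + 1) / t = k / t := Nat.succ_div_of_not_dvd hdvd
    have hmod : k % t ≤ (k + 1) % t := by
      have hsucc := Nat.mod_add_div (k + 1) t
      rw [hdiv] at hsucc
      have hk := Nat.mod_add_div k t
      lia
    rw [hdiv]
    gcongr

theorem greedyCost_monotone (h : (t - 1) * x ≤ y) : Monotone (greedyCost x y t) :=
  monotone_nat_of_le_succ (greedyCost_le_greedyCost_succ h)

theorem greedyCost_add_mul_le (ht : 0 < t) (h : y ≤ t * x) (i j : ℕ) :
    greedyCost x y t (i + t * j) ≤ i * x + j * y :=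
  calc greedyCost x y t (i + t * j) = i % t * x + i / t * y + j * y := by
        rw [greedyCost, Nat.add_mul_mod_self_left, Nat.add_mul_div_left _ _ ht]
        ring
    _ ≤ i % t * x + i / t * (t * x) + j * y := by gcongr
    _ = (i % t + t * (i / t)) * x + j * y := by ring
    _ = i * x + j * y := by rw [Nat.mod_add_div]

theorem add_mul_modEq (hy : y ≡ t * x [MOD m]) (i j : ℕ) :
    i * x + j * y ≡ (i + t * j) * x [MOD m] := by
  have h : i * x + j * y ≡ i * x + j * (t * x) [MOD m] := (hy.mul_left j).add_left (i * x)
  convert h using 1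
  ring

theorem greedyCost_modEq (hy : y ≡ t * x [MOD m]) (k : ℕ) :
    greedyCost x y t k ≡ k * x [MOD m] := by
  simpa only [greedyCost, Nat.mod_add_div] using add_mul_modEq hy (k % t) (k / t)

theorem mul_add_greedyCost_mem_gen (u k : ℕ) : u * m + greedyCost x y t k ∈ gen {m, x, y} :=
  mem_gen_triple.mpr ⟨u, k % t, k / t, add_assoc _ _ _⟩

theorem exists_eq_mul_add_greedyCost {s : ℕ} (hm : 0 < m) (ht : 0 < t)
    (hy : y ≡ t * x [MOD m]) (hle : (t - 1) * x ≤ y) (hge : y ≤ t * x)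
    (hs : s ∈ gen {m, x, y}) : ∃ k < m, ∃ u, s = u * m + greedyCost x y t k := by
  obtain ⟨u, i, j, rfl⟩ := mem_gen_triple.mp hs
  set k := i + t * j
  have hcost : greedyCost x y t (k % m) ≤ i * x + j * y :=
    (greedyCost_monotone hle (Nat.mod_le k m)).trans (greedyCost_add_mul_le ht hge i j)
  have hmod : greedyCost x y t (k % m) ≡ i * x + j * y [MOD m] :=
    calc greedyCost x y t (k % m) ≡ k % m * x [MOD m] := greedyCost_modEq hy _
      _ ≡ k * x [MOD m] := (Nat.mod_modEq k m).mul_right x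
      _ ≡ i * x + j * y [MOD m] := (add_mul_modEq hy i j).symm
  obtain ⟨v, hv⟩ := (Nat.modEq_iff_dvd' hcost).mp hmod
  refine ⟨k % m, Nat.mod_lt k hm, u + v, ?_⟩
  rw [add_mul, mul_comm v, ← hv]
  lia

theorem aperySet_gen_triple (hm : 0 < m) (ht : 0 < t) (hx : x.Coprime m)
    (hy : y ≡ t * x [MOD m]) (hle : (t - 1) * x ≤ y) (hge : y ≤ t * x) :
    AperySet (gen {m, x, y}) m = greedyCost x y t '' Set.Iio m := by
  ext s
  constructor
  · rintro ⟨hs, hs_sub⟩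
    obtain ⟨k, hk, u, rfl⟩ := exists_eq_mul_add_greedyCost hm ht hy hle hge hs
    cases u with
    | zero => exact ⟨k, hk, by simp⟩
    | succ v => exact absurd ⟨_, mul_add_greedyCost_mem_gen v k, by ring⟩ hs_sub
  · rintro ⟨k, hk, rfl⟩
    refine ⟨by simpa using mul_add_greedyCost_mem_gen (m := m) 0 k, ?_⟩
    rintro ⟨s, hs, hsk⟩
    obtain ⟨l, hl, u, rfl⟩ := exists_eq_mul_add_greedyCost hm ht hy hle hge hs
    have hmod : l * x ≡ k * x [MOD m] :=
      calc l * x ≡ greedyCost x y t l [MOD m] := (greedyCost_modEq hy l).symm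
        _ ≡ greedyCost x y t k [MOD m] := by
          rw [← hsk, Nat.ModEq]
          simp
        _ ≡ k * x [MOD m] := greedyCost_modEq hy k
    have hlk : l = k := (hmod.cancel_right_of_coprime hx.symm).eq_of_lt_of_lt hl hk
    subst hlk
    lia

end GreedyCost

theorem stmt10_general {m x y t : ℕ} (ht : 0 < t) (hx : x.Coprime m)
    (hy : y ≡ t * x [MOD m]) (hle : (t - 1) * x ≤ y) (hge : y ≤ t * x)
    (hone : 1 ∉ ({m, x, y} : Set ℕ)) :
    nsFrob (gen {m, x, y}) + m = (m - 1) % t * x + (m - 1) / t * y := by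
  have hm : 0 < m := by
    rw [Nat.pos_iff_ne_zero]
    rintro rfl
    obtain rfl : x = 1 := (Nat.coprime_zero_right x).mp hx
    simp at hone
  have hselmer : IsGreatest (AperySet (gen {m, x, y}) m) (nsFrob (gen {m, x, y}) + m) :=
    isGreatest_aperySet_of_isGreatest_compl hm
      (isGreatest_compl_gen_nsFrob (setGcd_triple_eq_one hx) hone)
  rw [aperySet_gen_triple hm ht hx hy hle hge] at hselmer
  have hlast : IsGreatest (Set.Iio m) (m - 1) :=
    ⟨Nat.sub_one_lt hm.ne', fun _ ↦ Nat.le_sub_one_of_lt⟩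
  exact hselmer.unique ((greedyCost_monotone hle).map_isGreatest hlast)

theorem stmt10 (m a b t q r : ℕ) (hm : 3 ≤ m) (ha : 1 ≤ a) (ht2 : 2 ≤ t) (htm : t ≤ m - 1)
    (h1 : (t - 1) * (a * m + 1) < b * m + t) (h2 : b * m + t < t * (a * m + 1))
    (hq : q = (m - 1) / t) (hr : r = (m - 1) % t) :
    (nsFrob (gen {m, a * m + 1, b * m + t}) : ℤ) =
      (r : ℤ) * (a * m + 1) + (q : ℤ) * (b * m + t) - m := by
  have ham : 0 < a * m := Nat.mul_pos ha (by lia)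
  have hone : 1 ∉ ({m, a * m + 1, b * m + t} : Set ℕ) := by
    simp only [Set.mem_insert_iff, Set.mem_singleton_iff]
    lia
  have hmod : b * m + t ≡ t * (a * m + 1) [MOD m] := by
    simp [Nat.ModEq, mul_add, ← mul_assoc]
  rw [hq, hr, eq_sub_iff_add_eq]
  exact_mod_cast stmt10_general (by lia) (by simp) hmod h1.le h2.le hone
end
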